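/- Let θ₃* be the unique root in (0,2π) of x² + 2x sin x + 6(cos x − 1) = 0 and set λ* = 6(θ₃* − sin θ₃*)/(θ₃*)³. Then inf_{λ≥0} sup_{x>0} (1/x³)·sqrt( (cos x − 1 + x²/2)² + (sin x − x + λx³/6)² ) = sup_{x>0} (cos x − 1 + x²/2)/x³, and the infimum is attained at λ = λ*. -/

import Mathlib

lemma p1_nonneg (y : ℝ) (h1 : (0) ≤ y) (h2 : y ≤ (225/16)) :
    0 ≤ ((11921/9000000)) * y ^ 0 + ((-199/1000000)) * y ^ 1 + ((611/63000000)) * y ^ 2 + ((-1229/6804000000)) * y ^ 3 + ((251/129360000000)) * y ^ 4 + ((-617/44478720000000)) * y ^ 5 + ((10499/147113366400000000)) * y ^ 6 + ((-2753/9873790617600000000)) * y ^ 7 + ((103/126713646259200000000)) * y ^ 8 + ((-1861/638636777146368000000000)) * y ^ 9 := by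
  have ht : 0 ≤ y - (0) := by linarith
  have hs : 0 ≤ (225/16) - y := by linarith
  have key : ((11921/9000000)) * y ^ 0 + ((-199/1000000)) * y ^ 1 + ((611/63000000)) * y ^ 2 + ((-1229/6804000000)) * y ^ 3 + ((251/129360000000)) * y ^ 4 + ((-617/44478720000000)) * y ^ 5 + ((10499/147113366400000000)) * y ^ 6 + ((-2753/9873790617600000000)) * y ^ 7 + ((103/126713646259200000000)) * y ^ 8 + ((-1861/638636777146368000000000)) * y ^ 9 =
      (12800076283904/207828545629978179931640625) * ((y - (0)) ^ 0 * ((225/16) - y) ^ 9) +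
      (9795276898304/23092060625553131103515625) * ((y - (0)) ^ 1 * ((225/16) - y) ^ 8) +
      (204548668915712/161644424378871917724609375) * ((y - (0)) ^ 2 * ((225/16) - y) ^ 7) +
      (1033387718672384/484933273136615753173828125) * ((y - (0)) ^ 3 * ((225/16) - y) ^ 6) +
      (27501688258909184/12446620677173137664794921875) * ((y - (0)) ^ 4 * ((225/16) - y) ^ 5) +
      (232985942324133092/161806068803250789642333984375) * ((y - (0)) ^ 5 * ((225/16) - y) ^ 4) +
      (42917036477059061/74679724063038825988769531250) * ((y - (0)) ^ 6 * ((225/16) - y) ^ 3) +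
      (3463429505123021012587/26758840434406402587890625000000000) * ((y - (0)) ^ 7 * ((225/16) - y) ^ 2) +
      (267297793199738732359/19460974861386474609375000000000000) * ((y - (0)) ^ 8 * ((225/16) - y) ^ 1) +
      (1681900278223880302902533/3452532628208851687500000000000000000000) * ((y - (0)) ^ 9 * ((225/16) - y) ^ 0) := by ring
  rw [key]
  positivity

lemma p2_nonneg (y : ℝ) (h1 : (225/16) ≤ y) (h2 : y ≤ (36)) :
    0 ≤ ((0)) * y ^ 0 + ((11921/300000)) * y ^ 1 + ((-1393/125000)) * y ^ 2 + ((611/700000)) * y ^ 3 + ((-13519/567000000)) * y ^ 4 + ((3263/9240000000)) * y ^ 5 + ((-617/185328000000)) * y ^ 6 + ((178483/8172964800000000)) * y ^ 7 + ((-1957/18525386880000000)) * y ^ 8 + ((14221/36203898931200000000)) * y ^ 9 + ((-1861/1520563755110400000000)) * y ^ 10 := by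
  have ht : 0 ≤ y - (225/16) := by linarith
  have hs : 0 ≤ (36) - y := by linarith
  have key : ((0)) * y ^ 0 + ((11921/300000)) * y ^ 1 + ((-1393/125000)) * y ^ 2 + ((611/700000)) * y ^ 3 + ((-13519/567000000)) * y ^ 4 + ((3263/9240000000)) * y ^ 5 + ((-617/185328000000)) * y ^ 6 + ((178483/8172964800000000)) * y ^ 7 + ((-1957/18525386880000000)) * y ^ 8 + ((14221/36203898931200000000)) * y ^ 9 + ((-1861/1520563755110400000000)) * y ^ 10 =
      (50968653879578656436687/63788413315386161726171875702112256000) * ((y - (225/16)) ^ 0 * ((36) - y) ^ 10) +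
      (22120915180510873310930459/548181676929099827334289556815027200000) * ((y - (225/16)) ^ 1 * ((36) - y) ^ 9) +
      (291987540377490268842863/679788785874379746198275740098000000) * ((y - (225/16)) ^ 2 * ((36) - y) ^ 8) +
      (235181131047472960937963/111527847682515427110654613609828125) * ((y - (225/16)) ^ 3 * ((36) - y) ^ 7) +
      (93892589907112999071488/15932549668930775301522087658546875) * ((y - (225/16)) ^ 4 * ((36) - y) ^ 6) +
      (272849213517188758153216/26554249448217958835870146097578125) * ((y - (225/16)) ^ 5 * ((36) - y) ^ 5) +
      (185242427221647812329472/15932549668930775301522087658546875) * ((y - (225/16)) ^ 6 * ((36) - y) ^ 4) +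
      (23904014112362509100908544/2788196192062885677766365340245703125) * ((y - (225/16)) ^ 7 * ((36) - y) ^ 3) +
      (3706029875958766605697024/929398730687628559255455113415234375) * ((y - (225/16)) ^ 8 * ((36) - y) ^ 2) +
      (1272451227671549607673856/1194941225169808147614156574391015625) * ((y - (225/16)) ^ 9 * ((36) - y) ^ 1) +
      (208632862672793922174976/1672917715237731406659819204147421875) * ((y - (225/16)) ^ 10 * ((36) - y) ^ 0) := by ring
  rw [key]
  positivity

noncomputable def CosT (n : ℕ) (x : ℝ) : ℝ :=
  ∑ k ∈ Finset.range n, (-1) ^ k * x ^ (2 * k) / ((2 * k).factorial : ℝ)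

noncomputable def SinT (n : ℕ) (x : ℝ) : ℝ :=
  ∑ k ∈ Finset.range n, (-1) ^ k * x ^ (2 * k + 1) / ((2 * k + 1).factorial : ℝ)

lemma hasDerivAt_ST (n : ℕ) (x : ℝ) : HasDerivAt (SinT n) (CosT n x) x := by
  unfold SinT CosT
  apply HasDerivAt.fun_sum
  intro k _
  have h := ((hasDerivAt_pow (2 * k + 1) x).const_mul ((-1 : ℝ) ^ k)).div_const
    ((2 * k + 1).factorial : ℝ)
  refine h.congr_deriv ?_
  rw [Nat.factorial_succ]
  have : ((2 * k).factorial : ℝ) ≠ 0 := by positivity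
  push_cast
  field_simp

lemma CT_succ (n : ℕ) (x : ℝ) : CosT (n + 1) x =
    1 - ∑ k ∈ Finset.range n, (-1) ^ k * x ^ (2 * k + 2) / ((2 * k + 2).factorial : ℝ) := by
  unfold CosT
  rw [Finset.sum_range_succ', sub_eq_add_neg, ← Finset.sum_neg_distrib, add_comm]
  congr 1
  · simp
  · apply Finset.sum_congr rfl
    intro k _
    rw [show 2 * (k + 1) = 2 * k + 2 by ring]
    ring

lemma hasDerivAt_CT (n : ℕ) (x : ℝ) : HasDerivAt (CosT (n + 1)) (-SinT n x) x := by
  rw [show CosT (n + 1) = fun x => 1 - ∑ k ∈ Finset.range n,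
    (-1) ^ k * x ^ (2 * k + 2) / ((2 * k + 2).factorial : ℝ) from funext (CT_succ n)]
  apply HasDerivAt.const_sub
  unfold SinT
  apply HasDerivAt.fun_sum
  intro k _
  have h := ((hasDerivAt_pow (2 * k + 2) x).const_mul ((-1 : ℝ) ^ k)).div_const
    ((2 * k + 2).factorial : ℝ)
  refine h.congr_deriv ?_
  rw [Nat.factorial_succ (2 * k + 1)]
  have : ((2 * k + 1).factorial : ℝ) ≠ 0 := by positivity
  push_cast
  field_simp
  ring

lemma nonneg_of_deriv {f f' : ℝ → ℝ} (h : ∀ x, HasDerivAt f (f' x) x) (h0 : 0 ≤ f 0)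
    (hf : ∀ x, 0 ≤ x → 0 ≤ f' x) (x : ℝ) (hx : 0 ≤ x) : 0 ≤ f x := by
  have hm : MonotoneOn f (Set.Ici 0) := by
    apply monotoneOn_of_deriv_nonneg (convex_Ici 0)
    · exact fun y _ => (h y).continuousAt.continuousWithinAt
    · exact fun y _ => (h y).differentiableAt.differentiableWithinAt
    · intro y hy
      rw [(h y).deriv]
      rw [interior_Ici] at hy
      exact hf y (le_of_lt hy)
  exact h0.trans (hm (by simp) (by simpa using hx) hx)

lemma ST_zero (n : ℕ) : SinT n 0 = 0 := by simp [SinT]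
lemma CT_zero (n : ℕ) : CosT (n + 1) 0 = 1 := by simp [CT_succ]

lemma taylor_sign (n : ℕ) :
    (∀ x : ℝ, 0 ≤ x → 0 ≤ (-1) ^ (n + 1) * (Real.cos x - CosT (n + 1) x)) ∧
    (∀ x : ℝ, 0 ≤ x → 0 ≤ (-1) ^ (n + 1) * (Real.sin x - SinT (n + 1) x)) := by
  have step : ∀ n : ℕ, (∀ x : ℝ, 0 ≤ x → 0 ≤ (-1) ^ (n + 1) * (Real.cos x - CosT (n + 1) x)) →
      (∀ x : ℝ, 0 ≤ x → 0 ≤ (-1) ^ (n + 1) * (Real.sin x - SinT (n + 1) x)) := by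
    intro n h
    refine nonneg_of_deriv (f' := fun x => (-1) ^ (n + 1) * (Real.cos x - CosT (n + 1) x)) ?_ ?_ h
    · intro x
      exact ((Real.hasDerivAt_sin x).sub (hasDerivAt_ST (n + 1) x)).const_mul _
    · simp [ST_zero]
  induction n with
  | zero =>
    have h0 : ∀ x : ℝ, 0 ≤ x → 0 ≤ (-1) ^ (0 + 1) * (Real.cos x - CosT (0 + 1) x) := by
      intro x _
      have := Real.cos_le_one x
      simp [CosT]
      linarith
    exact ⟨h0, step 0 h0⟩
  | succ n ih =>
    have h1 : ∀ x : ℝ, 0 ≤ x → 0 ≤ (-1) ^ (n + 1 + 1) * (Real.cos x - CosT (n + 1 + 1) x) := by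
      refine nonneg_of_deriv
        (f' := fun x => (-1) ^ (n + 1 + 1) * (- Real.sin x - -SinT (n + 1) x)) ?_ ?_ ?_
      · intro x
        exact ((Real.hasDerivAt_cos x).sub (hasDerivAt_CT (n + 1) x)).const_mul _
      · simp [CT_zero]
      · intro x hx
        have := ih.2 x hx
        rw [pow_succ]
        linarith
    exact ⟨h1, step _ h1⟩

noncomputable def C10 (x : ℝ) : ℝ := 1 - x^2/2 + x^4/24 - x^6/720 + x^8/40320 - x^10/3628800
  + x^12/479001600 - x^14/87178291200 + x^16/20922789888000 - x^18/6402373705728000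
noncomputable def S10 (x : ℝ) : ℝ := x - x^3/6 + x^5/120 - x^7/5040 + x^9/362880 - x^11/39916800
  + x^13/6227020800 - x^15/1307674368000 + x^17/355687428096000 - x^19/121645100408832000

lemma C10_eq (x : ℝ) : CosT 10 x = C10 x := by
  simp only [CosT, C10, Finset.sum_range_succ, Finset.sum_range_zero]
  norm_num [Nat.factorial]
  ring
lemma S10_eq (x : ℝ) : SinT 10 x = S10 x := by
  simp only [SinT, S10, Finset.sum_range_succ, Finset.sum_range_zero]
  norm_num [Nat.factorial]
  ring

lemma cos_enc (x : ℝ) (hx : 0 ≤ x) :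
    C10 x ≤ Real.cos x ∧ Real.cos x ≤ C10 x + x^20/2432902008176640000 := by
  have h1 := (taylor_sign 9).1 x hx
  have h2 := (taylor_sign 10).1 x hx
  have e : CosT 11 x = CosT 10 x + x^20/2432902008176640000 := by
    unfold CosT
    rw [Finset.sum_range_succ]
    norm_num [Nat.factorial]
  norm_num at h1 h2
  rw [e] at h2
  rw [C10_eq] at h1 h2
  constructor <;> linarith

lemma sin_enc (x : ℝ) (hx : 0 ≤ x) :
    S10 x ≤ Real.sin x ∧ Real.sin x ≤ S10 x + x^21/51090942171709440000 := by
  have h1 := (taylor_sign 9).2 x hx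
  have h2 := (taylor_sign 10).2 x hx
  have e : SinT 11 x = SinT 10 x + x^21/51090942171709440000 := by
    unfold SinT
    rw [Finset.sum_range_succ]
    norm_num [Nat.factorial]
  norm_num at h1 h2
  rw [e] at h2
  rw [S10_eq] at h1 h2
  constructor <;> linarith

noncomputable def phi (c b x : ℝ) : ℝ := c * x^6 + (2*b - 1/4) * x^4 - 2
  - (x^2 - 2) * Real.cos x - (2*b*x^3 - 2*x) * Real.sin x
noncomputable def phi1 (c b x : ℝ) : ℝ := 6 * c * x^5 + 4 * (2*b - 1/4) * x^3
  - 2*b*x^3 * Real.cos x + (1 - 6*b)*x^2 * Real.sin x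
noncomputable def phi2 (c b x : ℝ) : ℝ := 30 * c * x^4 + (24*b - 3) * x^2
  + (1 - 12*b)*x^2 * Real.cos x + (2*(1 - 6*b)*x + 2*b*x^3) * Real.sin x

lemma hasDerivAt_phi (c b x : ℝ) : HasDerivAt (phi c b) (phi1 c b x) x := by
  have hc := Real.hasDerivAt_cos x
  have hs := Real.hasDerivAt_sin x
  have hp (n : ℕ) := hasDerivAt_pow n x
  have h := (((((hp 6).const_mul c).add ((hp 4).const_mul (2*b - 1/4))).sub_const 2).sub
    (((hp 2).sub_const 2).mul hc)).sub
    ((((hp 3).const_mul (2*b)).sub ((hasDerivAt_id x).const_mul 2)).mul hs)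
  refine HasDerivAt.congr_deriv (f := phi c b) h ?_
  simp only [phi1, id]
  norm_num
  ring

lemma hasDerivAt_phi1 (c b x : ℝ) : HasDerivAt (phi1 c b) (phi2 c b x) x := by
  have hc := Real.hasDerivAt_cos x
  have hs := Real.hasDerivAt_sin x
  have hp (n : ℕ) := hasDerivAt_pow n x
  have h := ((((hp 5).const_mul (6*c)).add ((hp 3).const_mul (4*(2*b - 1/4)))).sub
    (((hp 3).const_mul (2*b)).mul hc)).add
    (((hp 2).const_mul (1-6*b)).mul hs)
  refine HasDerivAt.congr_deriv (f := phi1 c b) h ?_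
  simp only [phi2]
  norm_num
  ring

lemma phi_mono {c b : ℝ} (hc : 4289/1000000 ≤ c) (hb : 7444/100000 ≤ b) {x : ℝ} (hx : 0 ≤ x) :
    phi (4289/1000000) (7444/100000) x ≤ phi c b x := by
  have h1 : 0 ≤ (c - 4289/1000000) * x^6 := mul_nonneg (by linarith) (by positivity)
  have h2 : 0 ≤ (b - 7444/100000) * (2 * x^3 * (x - Real.sin x)) := by
    have := Real.sin_le hx
    exact mul_nonneg (by linarith) (mul_nonneg (by positivity) (by linarith))
  unfold phi
  nlinarith [h1, h2]

lemma region1 (x : ℝ) (hx : 0 ≤ x) (hx2 : x ≤ 15/4) :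
    0 ≤ phi (4289/1000000) (7444/100000) x := by
  obtain ⟨c1, c2⟩ := cos_enc x hx
  obtain ⟨s1, s2⟩ := sin_enc x hx
  have hp := p1_nonneg (x^2) (by positivity) (by nlinarith)
  have hp' := mul_nonneg (pow_nonneg hx 6) hp
  have a1 : 0 ≤ x^2 * (C10 x + x^20/2432902008176640000 - Real.cos x) :=
    mul_nonneg (by positivity) (by linarith)
  have a3 : 0 ≤ x^3 * (S10 x + x^21/51090942171709440000 - Real.sin x) :=
    mul_nonneg (by positivity) (by linarith)
  have a4 : 0 ≤ x * (Real.sin x - S10 x) := mul_nonneg hx (by linarith)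
  have key : 0 ≤ phi (4289/1000000) (7444/100000) x -
    (x^2 * (C10 x + x^20/2432902008176640000 - Real.cos x) + 2 * (Real.cos x - C10 x)
     + 2 * (7444/100000) * (x^3 * (S10 x + x^21/51090942171709440000 - Real.sin x))
     + 2 * (x * (Real.sin x - S10 x))) := by
    refine hp'.trans_eq ?_
    unfold phi C10 S10
    ring
  linarith

lemma region2 {c b : ℝ} (hc : 4289/1000000 ≤ c) (hb : 7444/100000 ≤ b) (x : ℝ)
    (hx : 15/4 ≤ x) (hx2 : x ≤ 6) : 0 ≤ phi2 c b x := by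
  have hx0 : 0 ≤ x := by linarith
  obtain ⟨c1, c2⟩ := cos_enc x hx0
  obtain ⟨s1, s2⟩ := sin_enc x hx0
  have hp := p2_nonneg (x^2) (by nlinarith) (by nlinarith)
  have hp' := mul_nonneg (pow_nonneg hx0 2) hp
  have hsin : Real.sin x ≤ 0 := by
    have h := Real.sin_nonneg_of_nonneg_of_le_pi (x := x - Real.pi)
      (by linarith [Real.pi_lt_d2]) (by linarith [Real.pi_gt_d2])
    rw [Real.sin_sub_pi] at h
    linarith
  have hcos := Real.cos_le_one x
  have hsin1 := Real.neg_one_le_sin x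
  have a1 : 0 ≤ x^2 * (Real.cos x - C10 x) := mul_nonneg (by positivity) (by linarith)
  have a2 : 0 ≤ x * (Real.sin x - S10 x) := mul_nonneg (by positivity) (by linarith)
  have a3 : 0 ≤ x^3 * (Real.sin x - S10 x) := mul_nonneg (by positivity) (by linarith)
  have key : 0 ≤ phi2 (4289/1000000) (7444/100000) x -
    ((1 - 12*(7444/100000)) * (x^2 * (Real.cos x - C10 x))
     + 2 * (1 - 6*(7444/100000)) * (x * (Real.sin x - S10 x))
     + 2 * (7444/100000) * (x^3 * (Real.sin x - S10 x))) := by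
    refine hp'.trans_eq ?_
    unfold phi2 C10 S10
    ring
  have h1 : 0 ≤ (c - 4289/1000000) * (30 * x^4) := mul_nonneg (by linarith) (by positivity)
  have h2 : 0 ≤ (b - 7444/100000) * (12 * x^2 * (1 - Real.cos x) + 12 * x * (-Real.sin x)
      + 2 * x^3 * (1 + Real.sin x) + 2 * x^2 * (6 - x)) := by
    apply mul_nonneg (by linarith)
    have e1 : 0 ≤ 12 * x^2 * (1 - Real.cos x) := mul_nonneg (by positivity) (by linarith)
    have e2 : 0 ≤ 12 * x * (-Real.sin x) := mul_nonneg (by positivity) (by linarith)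
    have e3 : 0 ≤ 2 * x^3 * (1 + Real.sin x) := mul_nonneg (by positivity) (by linarith)
    have e4 : 0 ≤ 2 * x^2 * (6 - x) := mul_nonneg (by positivity) (by linarith)
    linarith
  have e : phi2 c b x = phi2 (4289/1000000) (7444/100000) x + (c - 4289/1000000) * (30 * x^4)
    + (b - 7444/100000) * (12 * x^2 * (1 - Real.cos x) + 12 * x * (-Real.sin x)
      + 2 * x^3 * (1 + Real.sin x) + 2 * x^2 * (6 - x)) := by
    unfold phi2
    ring
  rw [e]
  linarith

lemma region3 (x : ℝ) (hx : 6 ≤ x) : 0 ≤ phi (4289/1000000) (7444/100000) x := by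
  have h1 : 0 ≤ (x^2 - 2) * (1 - Real.cos x) :=
    mul_nonneg (by nlinarith) (by linarith [Real.cos_le_one x])
  have h2 : 0 ≤ (2*(7444/100000)*x^3 - 2*x) * (1 - Real.sin x) := by
    apply mul_nonneg _ (by linarith [Real.sin_le_one x])
    have : 0 ≤ x * (x^2 - 36) := mul_nonneg (by linarith) (by nlinarith)
    nlinarith
  have h3 : 0 ≤ (4289/1000000) * x^6 + (2*(7444/100000) - 1/4) * x^4 - 2
      - (x^2 - 2) - (2*(7444/100000)*x^3 - 2*x) := by
    obtain ⟨t, rfl⟩ : ∃ t, x = 6 + t := ⟨x - 6, by ring⟩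
    have ht : 0 ≤ t := by linarith
    ring_nf
    positivity
  unfold phi
  linarith

lemma convex_min {f f' f'' : ℝ → ℝ} (h : ∀ x, HasDerivAt f (f' x) x)
    (h' : ∀ x, HasDerivAt f' (f'' x) x) {l r t : ℝ} (ht : t ∈ Set.Icc l r)
    (hf'' : ∀ x ∈ Set.Icc l r, 0 ≤ f'' x) (h0 : f t = 0) (h1 : f' t = 0) (x : ℝ)
    (hx : x ∈ Set.Icc l r) : 0 ≤ f x := by
  have hm : MonotoneOn f' (Set.Icc l r) := by
    apply monotoneOn_of_deriv_nonneg (convex_Icc l r)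
    · exact fun y _ => (h' y).continuousAt.continuousWithinAt
    · exact fun y _ => (h' y).differentiableAt.differentiableWithinAt
    · intro y hy
      rw [(h' y).deriv]
      exact hf'' y (interior_subset hy)
  rcases le_total t x with htx | htx
  · have hm2 : MonotoneOn f (Set.Icc t r) := by
      apply monotoneOn_of_deriv_nonneg (convex_Icc t r)
      · exact fun y _ => (h y).continuousAt.continuousWithinAt
      · exact fun y _ => (h y).differentiableAt.differentiableWithinAt
      · intro y hy
        rw [(h y).deriv, ← h1]
        have hy' := interior_subset hy
        exact hm ht ⟨ht.1.trans hy'.1, hy'.2⟩ hy'.1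
    rw [← h0]
    exact hm2 ⟨le_rfl, ht.2⟩ ⟨htx, hx.2⟩ htx
  · have hm2 : AntitoneOn f (Set.Icc l t) := by
      apply antitoneOn_of_deriv_nonpos (convex_Icc l t)
      · exact fun y _ => (h y).continuousAt.continuousWithinAt
      · exact fun y _ => (h y).differentiableAt.differentiableWithinAt
      · intro y hy
        rw [(h y).deriv, ← h1]
        have hy' := interior_subset hy
        exact hm ⟨hy'.1, hy'.2.trans ht.2⟩ ht hy'.2
    rw [← h0]
    exact hm2 ⟨hx.1, htx⟩ ⟨ht.1, le_rfl⟩ htx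

lemma root_loc : ∃ x ∈ Set.Icc (399589/100000 : ℝ) (399590/100000),
    x ^ 2 + 2 * x * Real.sin x + 6 * (Real.cos x - 1) = 0 := by
  have hcont : ContinuousOn (fun x : ℝ => x ^ 2 + 2 * x * Real.sin x + 6 * (Real.cos x - 1))
      (Set.Icc (399589/100000 : ℝ) (399590/100000)) := by fun_prop
  have := intermediate_value_Icc (by norm_num) hcont
  obtain ⟨x, hx, h⟩ := this (show (0:ℝ) ∈ _ by
    obtain ⟨c1, c2⟩ := cos_enc (399589/100000) (by norm_num)
    obtain ⟨s1, s2⟩ := sin_enc (399589/100000) (by norm_num)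
    obtain ⟨d1, d2⟩ := cos_enc (399590/100000) (by norm_num)
    obtain ⟨t1, t2⟩ := sin_enc (399590/100000) (by norm_num)
    norm_num [C10, S10] at c1 c2 s1 s2 d1 d2 t1 t2 ⊢
    constructor <;> linarith)
  exact ⟨x, hx, h⟩

lemma bounds (θ : ℝ) (h : θ ∈ Set.Icc (399589/100000 : ℝ) (399590/100000)) :
    7444/100000 * θ^3 ≤ θ - Real.sin θ ∧
    4289/1000000 * θ^6 ≤ (Real.cos θ - 1 + θ^2/2)^2 - (θ - Real.sin θ)^2 := by
  obtain ⟨h1, h2⟩ := h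
  have l1 : |Real.sin θ - Real.sin (399589/100000)| ≤ |θ - 399589/100000| := by
    simpa [Real.dist_eq] using Real.lipschitzWith_sin.dist_le_mul θ (399589/100000)
  have l2 : |Real.cos θ - Real.cos (399589/100000)| ≤ |θ - 399589/100000| := by
    simpa [Real.dist_eq] using Real.lipschitzWith_cos.dist_le_mul θ (399589/100000)
  rw [abs_of_nonneg (by linarith : 0 ≤ θ - 399589/100000), abs_le] at l1 l2
  obtain ⟨l3, l4⟩ := l1
  obtain ⟨l5, l6⟩ := l2
  obtain ⟨c1, c2⟩ := cos_enc (399589/100000) (by norm_num)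
  obtain ⟨s1, s2⟩ := sin_enc (399589/100000) (by norm_num)
  norm_num [C10, S10] at c1 c2 s1 s2
  have q2 : (399589/100000 : ℝ)^2 ≤ θ^2 := by gcongr
  have q3 : θ^3 ≤ (399590/100000 : ℝ)^3 := by gcongr
  have q6 : θ^6 ≤ (399590/100000 : ℝ)^6 := by gcongr
  have hs : θ - Real.sin θ ≤ (399589/100000) + 754110/1000000 + 2/100000 := by linarith
  have hs2 : (399589/100000) + 754109/1000000 - 2/100000 ≤ θ - Real.sin θ := by linarith
  have hN : -656749/1000000 - 2/100000 - 1 + (399589/100000 : ℝ)^2/2 ≤ Real.cos θ - 1 + θ^2/2 := by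
    linarith
  have e1 := pow_le_pow_left₀ (by norm_num) hN 2
  have e2 := pow_le_pow_left₀ (by linarith) hs 2
  norm_num at e1 e2 q3 q6
  constructor <;> linarith

lemma key_ineq (θ : ℝ) (h : θ ∈ Set.Icc (399589/100000 : ℝ) (399590/100000))
    (heq : θ ^ 2 + 2 * θ * Real.sin θ + 6 * (Real.cos θ - 1) = 0) (a b : ℝ)
    (ha : a = (Real.cos θ - 1 + θ ^ 2 / 2) / θ ^ 3) (hb : b = (θ - Real.sin θ) / θ ^ 3)
    (x : ℝ) (hx : 0 < x) :
    (Real.cos x - 1 + x ^ 2 / 2) ^ 2 + (Real.sin x - x + b * x ^ 3) ^ 2 ≤ (a * x ^ 3) ^ 2 := by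
  obtain ⟨B1, B2⟩ := bounds θ h
  have hθ : 0 < θ := by linarith [h.1]
  have ha' : a * θ^3 = Real.cos θ - 1 + θ ^ 2 / 2 := by rw [ha]; field_simp
  have hb' : b * θ^3 = θ - Real.sin θ := by rw [hb]; field_simp
  have hb0 : 7444/100000 ≤ b := by
    rw [hb, le_div_iff₀ (by positivity)]; exact B1
  have hc0 : 4289/1000000 ≤ a^2 - b^2 := by
    rw [← ha', ← hb'] at B2
    have : 4289/1000000 * θ^6 ≤ (a^2 - b^2) * θ^6 := by linarith
    exact le_of_mul_le_mul_right this (by positivity)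
  have ident : ∀ x, phi (a^2 - b^2) b x = (a * x ^ 3) ^ 2 -
      ((Real.cos x - 1 + x ^ 2 / 2) ^ 2 + (Real.sin x - x + b * x ^ 3) ^ 2) := by
    intro x
    unfold phi
    linear_combination (Real.sin_sq_add_cos_sq x)
  suffices 0 ≤ phi (a^2 - b^2) b x by
    rw [ident] at this; linarith
  rcases le_total x (15/4) with h1 | h1
  · exact (region1 x hx.le h1).trans (phi_mono hc0 hb0 hx.le)
  rcases le_total 6 x with h2 | h2
  · exact (region3 x h2).trans (phi_mono hc0 hb0 hx.le)
  refine convex_min (hasDerivAt_phi _ _) (hasDerivAt_phi1 _ _) (l := 15/4) (r := 6) (t := θ)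
    ⟨by linarith [h.1], by linarith [h.2]⟩ (fun y hy => region2 hc0 hb0 y hy.1 hy.2) ?_ ?_ x ⟨h1, h2⟩
  · rw [ident, ha', show Real.sin θ - θ + b * θ^3 = 0 by linarith]
    ring
  · have hmul : θ * phi1 (a^2 - b^2) b θ = 0 := by
      have e : θ * phi1 (a^2 - b^2) b θ = 6 * (a * θ^3)^2 - 6 * (b * θ^3)^2 + 8 * (b * θ^3) * θ - θ^4
        - 2 * (b * θ^3) * θ * Real.cos θ + θ^3 * Real.sin θ - 6 * (b * θ^3) * Real.sin θ := by
        unfold phi1; ring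
      rw [e, ha', hb']
      have hN : 3 * (Real.cos θ - 1 + θ ^ 2 / 2) = θ * (θ - Real.sin θ) := by linarith
      linear_combination 2 * (Real.cos θ - 1 + θ ^ 2 / 2) * hN
    rcases mul_eq_zero.mp hmul with h0 | h0
    · linarith
    · exact h0

lemma bddF (l : ℝ) : ∃ M, ∀ x : ℝ, 0 < x → (1 / x ^ 3) *
    Real.sqrt ((Real.cos x - 1 + x ^ 2 / 2) ^ 2 + (Real.sin x - x + l * x ^ 3 / 6) ^ 2) ≤ M := by
  obtain ⟨θ, hθ, heq⟩ := root_loc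
  have key := key_ineq θ hθ heq _ _ rfl rfl
  set a := (Real.cos θ - 1 + θ ^ 2 / 2) / θ ^ 3
  set b := (θ - Real.sin θ) / θ ^ 3
  refine ⟨|a| + (|a| + |l / 6 - b|), fun x hx => ?_⟩
  have hx3 : 0 < x^3 := by positivity
  have k := key x hx
  have k1 : |Real.cos x - 1 + x ^ 2 / 2| ≤ |a * x^3| := by
    apply sq_le_sq.mp; nlinarith [sq_nonneg (Real.sin x - x + b * x ^ 3)]
  have k2 : |Real.sin x - x + b * x ^ 3| ≤ |a * x^3| := by
    apply sq_le_sq.mp; nlinarith [sq_nonneg (Real.cos x - 1 + x ^ 2 / 2)]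
  have k3 : |Real.sin x - x + l * x ^ 3 / 6| ≤ |a * x^3| + |(l/6 - b) * x^3| := by
    have := abs_add_le (Real.sin x - x + b * x ^ 3) ((l/6 - b) * x^3)
    rw [show Real.sin x - x + l * x ^ 3 / 6 =
      (Real.sin x - x + b * x ^ 3) + ((l/6 - b) * x^3) by ring]
    linarith
  have hsq : Real.sqrt ((Real.cos x - 1 + x ^ 2 / 2) ^ 2 + (Real.sin x - x + l * x ^ 3 / 6) ^ 2)
      ≤ |Real.cos x - 1 + x ^ 2 / 2| + |Real.sin x - x + l * x ^ 3 / 6| := by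
    apply Real.sqrt_le_iff.mpr
    refine ⟨by positivity, ?_⟩
    rw [← sq_abs (Real.cos x - 1 + x ^ 2 / 2), ← sq_abs (Real.sin x - x + l * x ^ 3 / 6)]
    nlinarith [mul_nonneg (abs_nonneg (Real.cos x - 1 + x ^ 2 / 2))
      (abs_nonneg (Real.sin x - x + l * x ^ 3 / 6))]
  rw [abs_mul, abs_of_pos hx3] at k1 k3
  rw [abs_mul, abs_of_pos hx3] at k3
  rw [one_div, inv_mul_le_iff₀ hx3]
  linarith

theorem inf_q3_value (θ : ℝ) (hθ : θ ∈ Set.Ioo 0 (2 * Real.pi))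
    (heq : θ ^ 2 + 2 * θ * Real.sin θ + 6 * (Real.cos θ - 1) = 0)
    (huniq : ∀ x ∈ Set.Ioo 0 (2 * Real.pi),
      x ^ 2 + 2 * x * Real.sin x + 6 * (Real.cos x - 1) = 0 → x = θ)
    (lstar : ℝ) (hlstar : lstar = 6 * (θ - Real.sin θ) / θ ^ 3) :
    sInf {v : ℝ | ∃ l : ℝ, 0 ≤ l ∧
        v = sSup {y : ℝ | ∃ x : ℝ, 0 < x ∧
          y = (1 / x ^ 3) * Real.sqrt ((Real.cos x - 1 + x ^ 2 / 2) ^ 2 +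
            (Real.sin x - x + l * x ^ 3 / 6) ^ 2)}} =
      sSup {y : ℝ | ∃ x : ℝ, 0 < x ∧ y = (Real.cos x - 1 + x ^ 2 / 2) / x ^ 3} ∧
    sSup {y : ℝ | ∃ x : ℝ, 0 < x ∧
        y = (1 / x ^ 3) * Real.sqrt ((Real.cos x - 1 + x ^ 2 / 2) ^ 2 +
          (Real.sin x - x + lstar * x ^ 3 / 6) ^ 2)} =
      sSup {y : ℝ | ∃ x : ℝ, 0 < x ∧ y = (Real.cos x - 1 + x ^ 2 / 2) / x ^ 3} := by
  have hloc : θ ∈ Set.Icc (399589/100000 : ℝ) (399590/100000) := by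
    obtain ⟨x, hx, h⟩ := root_loc
    have : x = θ := huniq x ⟨by linarith [hx.1], by linarith [hx.2, Real.pi_gt_three]⟩ h
    rwa [← this]
  have hθ0 : 0 < θ := hθ.1
  have key := key_ineq θ hloc heq _ _ rfl rfl
  set a := (Real.cos θ - 1 + θ ^ 2 / 2) / θ ^ 3 with ha
  set b := (θ - Real.sin θ) / θ ^ 3 with hb
  have hlb : lstar = 6 * b := by rw [hlstar, hb]; ring
  have hb0 : 0 ≤ b := div_nonneg (by linarith [Real.sin_le hθ0.le]) (by positivity)
  have ha0 : 0 ≤ a := div_nonneg (by linarith [Real.one_sub_sq_div_two_le_cos (x := θ)])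
    (by positivity)
  -- pointwise comparison
  have hle : ∀ l x : ℝ, 0 < x → (Real.cos x - 1 + x ^ 2 / 2) / x ^ 3 ≤ (1 / x ^ 3) *
      Real.sqrt ((Real.cos x - 1 + x ^ 2 / 2) ^ 2 + (Real.sin x - x + l * x ^ 3 / 6) ^ 2) := by
    intro l x hx
    rw [div_eq_mul_one_div, mul_comm]
    apply mul_le_mul_of_nonneg_left _ (by positivity)
    apply Real.le_sqrt_of_sq_le
    nlinarith [sq_nonneg (Real.sin x - x + l * x ^ 3 / 6)]
  have hbdd : ∀ l : ℝ, BddAbove {y : ℝ | ∃ x : ℝ, 0 < x ∧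
      y = (1 / x ^ 3) * Real.sqrt ((Real.cos x - 1 + x ^ 2 / 2) ^ 2 +
        (Real.sin x - x + l * x ^ 3 / 6) ^ 2)} := by
    intro l
    obtain ⟨M, hM⟩ := bddF l
    refine ⟨M, ?_⟩
    rintro y ⟨x, hx, rfl⟩
    exact hM x hx
  have hge : ∀ l : ℝ, sSup {y : ℝ | ∃ x : ℝ, 0 < x ∧
      y = (Real.cos x - 1 + x ^ 2 / 2) / x ^ 3} ≤ sSup {y : ℝ | ∃ x : ℝ, 0 < x ∧
      y = (1 / x ^ 3) * Real.sqrt ((Real.cos x - 1 + x ^ 2 / 2) ^ 2 +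
        (Real.sin x - x + l * x ^ 3 / 6) ^ 2)} := by
    intro l
    apply csSup_le
    · exact ⟨a, θ, hθ0, rfl⟩
    rintro y ⟨x, hx, rfl⟩
    exact (hle l x hx).trans (le_csSup (hbdd l) ⟨x, hx, rfl⟩)
  have hbddA : BddAbove {y : ℝ | ∃ x : ℝ, 0 < x ∧
      y = (Real.cos x - 1 + x ^ 2 / 2) / x ^ 3} := by
    obtain ⟨M, hM⟩ := bddF 0
    refine ⟨M, ?_⟩
    rintro y ⟨x, hx, rfl⟩
    exact (hle 0 x hx).trans (hM x hx)
  have hstar : sSup {y : ℝ | ∃ x : ℝ, 0 < x ∧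
        y = (1 / x ^ 3) * Real.sqrt ((Real.cos x - 1 + x ^ 2 / 2) ^ 2 +
          (Real.sin x - x + lstar * x ^ 3 / 6) ^ 2)} =
      sSup {y : ℝ | ∃ x : ℝ, 0 < x ∧ y = (Real.cos x - 1 + x ^ 2 / 2) / x ^ 3} := by
    apply le_antisymm _ (hge lstar)
    refine le_trans (csSup_le ⟨_, θ, hθ0, rfl⟩ ?_) (le_csSup hbddA ⟨θ, hθ0, rfl⟩)
    rintro y ⟨x, hx, rfl⟩
    have hx3 : 0 < x^3 := by positivity
    rw [one_div, inv_mul_le_iff₀ hx3]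
    apply Real.sqrt_le_iff.mpr
    refine ⟨mul_nonneg hx3.le ha0, ?_⟩
    have k := key x hx
    rw [hlb, show 6 * b * x^3 / 6 = b * x^3 by ring, mul_comm (x^3)]
    exact k
  refine ⟨?_, hstar⟩
  apply le_antisymm
  · rw [← hstar]
    refine csInf_le ⟨sSup {y : ℝ | ∃ x : ℝ, 0 < x ∧
      y = (Real.cos x - 1 + x ^ 2 / 2) / x ^ 3}, ?_⟩ ⟨lstar, by rw [hlb]; positivity, rfl⟩
    rintro v ⟨l, _, rfl⟩
    exact hge l
  · refine le_csInf ⟨_, ⟨0, le_rfl, rfl⟩⟩ ?_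
    rintro v ⟨l, _, rfl⟩
    exact hge l
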